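/- For all integers r,q ≥ 1, the permutation σ_{rq} satisfies σ_{rq}(1) = 1 and σ_{rq}(N) = N (dissipativity), and its inverse satisfies the following arc conditions: (lower rainbow) σ_{rq}^{−1}(n) + σ_{rq}^{−1}(n+1) = N+2 for every even n with 2 ≤ n ≤ N−1; (upper left p-nest, p = r(q+1)) σ_{rq}^{−1}(n) + σ_{rq}^{−1}(n+1) = 2r(q+1)+1 for every odd n of the form n = 2(j+(r+1)k)+1 with 0 ≤ j ≤ r−1 and 0 ≤ k ≤ q; (upper right q-nest) σ_{rq}^{−1}(n) + σ_{rq}^{−1}(n+1) = 4r(q+1)+2q+1 for every odd n of the form n = 2(r+(r+1)k)+1 with 0 ≤ k ≤ q−1. -/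

import Mathlib

/-- Morse numbers `i_j` of a permutation `σ` of `{1,…,N}` (extended to `ℕ`),
via the recursion `i_1 = 0`,
`i_{j+1} = i_j + (-1)^(j+1) * sign (σ⁻¹(j+1) - σ⁻¹(j))`. -/
def morse (σ : Equiv.Perm ℕ) : ℕ → ℤ
  | 0 => 0
  | 1 => 0
  | (j+2) => morse σ (j+1) +
      (-1)^(j+2) * Int.sign ((σ.symm (j+2) : ℤ) - (σ.symm (j+1) : ℤ))

/-- Zero numbers `z_{j k}`, recursion in the first index `j`, second index `k` fixed:
`z_{1k} = 0`, `z_{kk} = i_k`, `z_{k+1,k} = min (i_k, i_{k+1})`, and otherwise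
`z_{j+1,k} = z_{jk} + ((-1)^(j+1)/2) * (sign (σ⁻¹(j+1) - σ⁻¹(k)) - sign (σ⁻¹(j) - σ⁻¹(k)))`. -/
def zrec (σ : Equiv.Perm ℕ) (k : ℕ) : ℕ → ℤ
  | 0 => 0
  | 1 => 0
  | (j+2) =>
      if j+2 = k then morse σ k
      else if j+1 = k then min (morse σ k) (morse σ (k+1))
      else zrec σ k (j+1) +
        ((-1)^(j+2) * (Int.sign ((σ.symm (j+2) : ℤ) - (σ.symm k : ℤ))
          - Int.sign ((σ.symm (j+1) : ℤ) - (σ.symm k : ℤ)))) / 2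

/-- The zero number `z_{m n}`. -/
def zfun (σ : Equiv.Perm ℕ) (m n : ℕ) : ℤ := zrec σ n m

/-- The connection digraph of a dissipative Morse permutation `σ` of `{1,…,N}`:
an edge `m ⤳ n` iff `i_m = i_n + 1` and no `w` strictly between `m` and `n`
blocks, i.e. satisfies `z_{mw} = z_{wn} = z_{mn}`. -/
def hasEdge (N : ℕ) (σ : Equiv.Perm ℕ) (m n : ℕ) : Prop :=
  1 ≤ m ∧ m ≤ N ∧ 1 ≤ n ∧ n ≤ N ∧
  morse σ m = morse σ n + 1 ∧
  ¬ ∃ w : ℕ, min m n < w ∧ w < max m n ∧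
      zfun σ m w = zfun σ w n ∧ zfun σ w n = zfun σ m n

/-- A dissipative permutation of `{1,…,N}`. -/
def Dissipative (N : ℕ) (σ : Equiv.Perm ℕ) : Prop :=
  Set.BijOn σ (Set.Icc 1 N) (Set.Icc 1 N) ∧ σ 1 = 1 ∧ σ N = N

/-- The Morse property: all Morse numbers are nonnegative. -/
def MorseProp (N : ℕ) (σ : Equiv.Perm ℕ) : Prop :=
  ∀ j, 1 ≤ j → j ≤ N → 0 ≤ morse σ j

/-- Morse counts `μ(i) = #{j ∈ {1,…,N} : i_j = i}`. -/
def morseCount (N : ℕ) (σ : Equiv.Perm ℕ) (i : ℤ) : ℕ :=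
  ((Finset.Icc 1 N).filter (fun j => morse σ j = i)).card

/-- The primitive 3-nose permutation `σ_{rq}` of `{1,…,N}`, `N = 2(r+1)(q+1)-1`,
characterized by its defining relations, extended to a permutation of `ℕ`
fixing everything outside `{1,…,N}`. -/
def SigmaRQ (r q : ℕ) (σ : Equiv.Perm ℕ) : Prop :=
  (∀ a, a ∉ Set.Icc 1 (2*(r+1)*(q+1) - 1) → σ a = a) ∧
  (∀ j k, j ≤ r → k ≤ q →
    σ (2*((q+1)*j+k)+1) = 2*(j+(r+1)*k)+1) ∧
  (∀ j k, j ≤ r → k ≤ q → ¬(j = 0 ∧ k = 0) →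
    σ (2*((q+1)*(r-j)+(q-k)+1)) = 2*(j+(r+1)*k))

/-- Tags `A`, `B` of equilibrium labels `A^j_k`, `B^j_k`. -/
inductive Tag | A | B
deriving DecidableEq

/-- The axis position (`h_1`-position) of the label `L^j_k` for parameters `(r,q)`. -/
def axisPos (r q : ℕ) : Tag → ℕ → ℕ → ℕ
  | Tag.A, j, k => if Odd j then (q+1)*(j-1)+k+1 else (q+1)*(2*r+1-j)+(q-k)+1
  | Tag.B, j, k => if Odd j then (q+1)*j+(q-k)+1 else (q+1)*(2*r-j)+k+1

/-- The meander position (`h_0`-position) of the label `L^j_k` for parameters `(r,q)`. -/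
def meanderPos (r q : ℕ) : Tag → ℕ → ℕ → ℕ
  | Tag.A, j, k => if Odd k then (r+1)*(2*q+1-k)+(2*r+1-j) else (r+1)*k+j
  | Tag.B, j, k => if Odd k then (r+1)*(2*q+1-k)+j else (r+1)*(k+1)+(r-j)

/-- The suspension `σ̃` of a dissipative permutation `σ` of `{1,…,N}`:
`σ̃(1) = 1`, `σ̃(N+2) = N+2`, and `σ̃(a+1) = N+2 - σ(a)` for `1 ≤ a ≤ N`. -/
def IsSuspension (N : ℕ) (σ σt : Equiv.Perm ℕ) : Prop :=
  σt 1 = 1 ∧ σt (N+2) = N+2 ∧ ∀ a, 1 ≤ a → a ≤ N → σt (a+1) = N+2 - σ a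

/-- The label `A^0_0` is the distinguished (formal) vertex `⋆`. -/
def IsStar (L : Tag) (j k : ℕ) : Prop := L = Tag.A ∧ j = 0 ∧ k = 0

/-- Tag swap `A ↔ B`, used by the reversor. -/
def tagSwap : Tag → Tag
  | Tag.A => Tag.B
  | Tag.B => Tag.A

/-- `σ_{rq}` is dissipative, and its inverse satisfies the
lower-rainbow, upper-left `p`-nest and upper-right `q`-nest arc conditions. -/
theorem stmt_1 (r q : ℕ) (hr : 1 ≤ r) (hq : 1 ≤ q)
    (σ : Equiv.Perm ℕ) (hσ : SigmaRQ r q σ) :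
    σ 1 = 1 ∧ σ (2*(r+1)*(q+1)-1) = 2*(r+1)*(q+1)-1 ∧
    -- lower rainbow: for every even n, 2 ≤ n ≤ N-1
    (∀ n, 2 ≤ n → n ≤ 2*(r+1)*(q+1)-2 → Even n →
      σ.symm n + σ.symm (n+1) = 2*(r+1)*(q+1)+1) ∧
    -- upper left p-nest, p = r(q+1): odd n = 2(j+(r+1)k)+1, 0 ≤ j ≤ r-1, 0 ≤ k ≤ q
    (∀ j k, j ≤ r-1 → k ≤ q →
      σ.symm (2*(j+(r+1)*k)+1) + σ.symm (2*(j+(r+1)*k)+1+1) = 2*r*(q+1)+1) ∧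
    -- upper right q-nest: odd n = 2(r+(r+1)k)+1, 0 ≤ k ≤ q-1
    (∀ k, k ≤ q-1 →
      σ.symm (2*(r+(r+1)*k)+1) + σ.symm (2*(r+(r+1)*k)+1+1) = 4*r*(q+1)+2*q+1) := by
  obtain ⟨-, hA, hB⟩ := hσ
  have hO : ∀ j k, j ≤ r → k ≤ q → σ.symm (2*(j+(r+1)*k)+1) = 2*((q+1)*j+k)+1 := by
    intro j k hj hk
    rw [Equiv.symm_apply_eq, hA j k hj hk]
  have hE : ∀ j k, j ≤ r → k ≤ q → ¬(j = 0 ∧ k = 0) →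
      σ.symm (2*(j+(r+1)*k)) = 2*((q+1)*(r-j)+(q-k)+1) := by
    intro j k hj hk h0
    rw [Equiv.symm_apply_eq, hB j k hj hk h0]
  refine ⟨?_, ?_, ?_, ?_, ?_⟩
  · simpa using hA 0 0 (Nat.zero_le _) (Nat.zero_le _)
  · have h := hA r q le_rfl le_rfl
    have e1 : 2*(r+1)*(q+1)-1 = 2*((q+1)*r+q)+1 := by
      have : 2*(r+1)*(q+1) = 2*((q+1)*r+q)+2 := by ring
      omega
    have e2 : 2*((q+1)*r+q)+1 = 2*(r+(r+1)*q)+1 := by ring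
    rw [e1, h, e2]
  · intro n hn2 hnN hev
    obtain ⟨m, rfl⟩ := hev
    have hm : m < (q+1)*(r+1) := by
      have : 2*(r+1)*(q+1) = 2*((q+1)*(r+1)) := by ring
      omega
    have hj : m % (r+1) ≤ r := Nat.lt_succ_iff.mp (Nat.mod_lt _ (Nat.succ_pos r))
    have hk : m / (r+1) ≤ q :=
      Nat.lt_succ_iff.mp ((Nat.div_lt_iff_lt_mul (Nat.succ_pos r)).mpr hm)
    have hme : m % (r+1) + (r+1) * (m / (r+1)) = m := Nat.mod_add_div m (r+1)
    generalize m % (r+1) = j at *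
    generalize m / (r+1) = k at *
    have h0 : ¬(j = 0 ∧ k = 0) := by
      rintro ⟨rfl, rfl⟩
      omega
    have h1 := hO j k hj hk
    have h2 := hE j k hj hk h0
    rw [hme] at h1 h2
    rw [← two_mul, h1, h2]
    obtain ⟨d, rfl⟩ := Nat.exists_eq_add_of_le hj
    obtain ⟨e, rfl⟩ := Nat.exists_eq_add_of_le hk
    simp only [Nat.add_sub_cancel_left]
    ring
  · intro j k hj hk
    have h1 := hO j k (by omega) hk
    have h2 := hE (j+1) k (by omega) hk (by omega)
    have e : 2*(j+(r+1)*k)+1+1 = 2*(j+1+(r+1)*k) := by ring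
    rw [e, h1, h2]
    obtain ⟨d, rfl⟩ := Nat.exists_eq_add_of_le (show j+1 ≤ r by omega)
    obtain ⟨e, rfl⟩ := Nat.exists_eq_add_of_le hk
    simp only [Nat.add_sub_cancel_left]
    ring
  · intro k hk
    have h1 := hO r k le_rfl (by omega)
    have h2 := hE 0 (k+1) (Nat.zero_le _) (by omega) (by omega)
    have e : 2*(r+(r+1)*k)+1+1 = 2*(0+(r+1)*(k+1)) := by ring
    rw [e, h1, h2]
    obtain ⟨e, rfl⟩ := Nat.exists_eq_add_of_le (show k+1 ≤ q by omega)
    simp only [Nat.add_sub_cancel_left, Nat.sub_zero]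
    ring
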